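/- Consistency of approximating decision rules under a unique fixed point: Under the hypotheses of the infinite-horizon consistency theorem (including 𝒱 compact under the Attouch–Wets distance dl and each B_ν having a fixed point V_ν = B_ν(V_ν) ∈ 𝒱), if the fixed point V = B(V) in 𝒱 is unique, then V_ν epi-converges to V, and for every (x,ξ) ∈ 𝒳 × Ξ the outer limit of the sets argmin_{y∈𝒴(x,ξ)} { φ_ν(x,y,ξ) + β V_ν(y) } is contained in argmin_{y∈𝒴(x,ξ)} { φ(x,y,ξ) + β V(y) }, and this latter set is nonempty. -/

import Mathlib

/-!
Along any subsequence of the fixed points `Vs ν`, compactness of `𝒱` gives a further subsequence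
converging to some `W ∈ 𝒱` in the Attouch–Wets distance, hence epi-converging on `X`
(`epiConvergesOn_of_awDist`). Completing it by `W` to a full sequence `V'` makes the
equi-semicontinuity and tail hypotheses available. Equi-lower semicontinuity turns epi-convergence
into pointwise convergence (`EpiConvergesOn.tendsto`), and compactness of `Y x ξ` then gives
pointwise convergence of the inner minimal values (`iInf_lower`, `iInf_upper`). Equi-semicontinuity
makes this convergence semicontinuous in `(ν, ξ)` jointly, and Fatou's lemma for weakly convergent
measures (`eintegral_lower`), applied to the values and to their negatives, shows that
`B_ν(V'_ν)(x)` tends to `B(W)(x)` for every `x ∈ X`. Since `Vs ν = B_ν(Vs ν)`, the limit `W` is a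
fixed point of `B`, so `W = V` on `X`. Every subsequence thus has a further subsequence along which
`awDist (Vs ν) V` tends to `0`, so the whole sequence converges.

The statement on minimizers follows from the joint lower convergence and the pointwise convergence
of the objectives (`outerLimit_argmin_subset`, `argmin_nonempty`).
-/

open Filter MeasureTheory Topology Set

noncomputable section

/-- Extended-real to extended-nonnegative-real (positive part). -/
def erealToENN (x : EReal) : ENNReal := if x = ⊤ then ⊤ else ENNReal.ofReal x.toReal

/-- Integral of an extended-real-valued function. -/
def eintegral {Ω : Type*} [MeasurableSpace Ω] (P : Measure Ω) (g : Ω → EReal) : EReal :=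
  ((∫⁻ ω, erealToENN (g ω) ∂P : ENNReal) : EReal) -
    ((∫⁻ ω, erealToENN (-(g ω)) ∂P : ENNReal) : EReal)

/-- Integrability of an extended-real-valued function. -/
def EIntegrable {Ω : Type*} [MeasurableSpace Ω] (P : Measure Ω) (g : Ω → EReal) : Prop :=
  AEMeasurable g P ∧ (∫⁻ ω, erealToENN (g ω) ∂P) < ⊤ ∧ (∫⁻ ω, erealToENN (-(g ω)) ∂P) < ⊤

/-- g·1{g ≤ α}. -/
def truncBelow {Ω : Type*} (g : Ω → EReal) (α : ℝ) (ω : Ω) : EReal :=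
  if g ω ≤ (α : EReal) then g ω else 0

/-- g·1{g ≥ α}. -/
def truncAbove {Ω : Type*} (g : Ω → EReal) (α : ℝ) (ω : Ω) : EReal :=
  if (α : EReal) ≤ g ω then g ω else 0

/-- Epi-convergence of a sequence of extended-real-valued functions on a set `Z`. -/
def EpiConvergesOn {E : Type*} [TopologicalSpace E] (Z : Set E)
    (F : ℕ → E → EReal) (f : E → EReal) : Prop :=
  ∀ z ∈ Z,
    (∀ zs : ℕ → E, (∀ ν, zs ν ∈ Z) → Tendsto zs atTop (𝓝 z) →
      f z ≤ liminf (fun ν => F ν (zs ν)) atTop) ∧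
    (∃ zs : ℕ → E, (∀ ν, zs ν ∈ Z) ∧ Tendsto zs atTop (𝓝 z) ∧
      limsup (fun ν => F ν (zs ν)) atTop ≤ f z)

/-- A sequence of functions is equi-lower semicontinuous on `Z`. -/
def EquiLscOn {E : Type*} [PseudoMetricSpace E] (Z : Set E) (F : ℕ → E → EReal) : Prop :=
  ∀ z ∈ Z,
    limsup (fun ν => F ν z) atTop = ⊥ ∨
    ∀ ρ ε : ℝ, 0 < ρ → 0 < ε → ∃ ν' : ℕ, ∃ δ : ℝ, 0 < δ ∧ ∀ ν, ν' ≤ ν →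
      min (F ν z - (ε : EReal)) (ρ : EReal) ≤
        ⨅ (w : E) (_ : w ∈ Z) (_ : dist w z ≤ δ), F ν w

/-- Equi-upper semicontinuity on `Z`. -/
def EquiUscOn {E : Type*} [PseudoMetricSpace E] (Z : Set E) (F : ℕ → E → EReal) : Prop :=
  EquiLscOn Z (fun ν z => -(F ν z))

/-- Iterated lower limit as `(ν, x) → (∞, x̄)` with `x` ranging over `X`. -/
def liminfNuX {E : Type*} [PseudoMetricSpace E] (X : Set E) (xb : E)
    (h : ℕ → E → EReal) : EReal :=
  ⨆ (δ : ℝ) (_ : 0 < δ) (ν' : ℕ),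
    ⨅ (ν : ℕ) (_ : ν' ≤ ν) (x : E) (_ : x ∈ X) (_ : dist x xb ≤ δ), h ν x

/-- Upper limit as `ν → ∞`. -/
def limsupNu (h : ℕ → EReal) : EReal := ⨅ (ν' : ℕ), ⨆ (ν : ℕ) (_ : ν' ≤ ν), h ν

/-- Lower limit as `α → −∞`. -/
def liminfAlphaBot (G : ℝ → EReal) : EReal := ⨆ (αb : ℝ), ⨅ (α : ℝ) (_ : α ≤ αb), G α

/-- Upper limit as `α → ∞`. -/
def limsupAlphaTop (G : ℝ → EReal) : EReal := ⨅ (αb : ℝ), ⨆ (α : ℝ) (_ : αb ≤ α), G α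

/-- Weak convergence of measures: integrals of bounded continuous functions converge. -/
def WeakConv {Ω : Type*} [TopologicalSpace Ω] [MeasurableSpace Ω]
    (Pν : ℕ → Measure Ω) (P : Measure Ω) : Prop :=
  ∀ h : Ω → ℝ, Continuous h → (∃ C : ℝ, ∀ ω, |h ω| ≤ C) →
    Tendsto (fun ν => ∫ ω, h ω ∂(Pν ν)) atTop (𝓝 (∫ ω, h ω ∂P))

/-- The outer limit of a sequence of sets in a topological space. -/
def OuterLimit {X : Type*} [TopologicalSpace X] (S : ℕ → Set X) : Set X :=
  {x | ∃ φ : ℕ → ℕ, StrictMono φ ∧ ∃ s : ℕ → X, (∀ κ, s κ ∈ S (φ κ)) ∧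
    Tendsto s atTop (𝓝 x)}

/-- The set of minimizers of `g` over `S`. -/
def ArgminOn {E : Type*} (S : Set E) (g : E → EReal) : Set E :=
  {y ∈ S | ∀ z ∈ S, g y ≤ g z}

/-- `b(f)(x,ξ) = inf_{y ∈ 𝒴(x,ξ)} { φ(x,y,ξ) + β f(y) }`. -/
def bop {E Ξ' : Type*} (Y : E → Ξ' → Set E) (β : ℝ) (φ : E → E → Ξ' → ℝ)
    (f : E → EReal) (x : E) (ξ : Ξ') : EReal :=
  ⨅ (y : E) (_ : y ∈ Y x ξ), (((φ x y ξ : ℝ) : EReal) + (β : EReal) * f y)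

/-- The epigraph of `f`, viewed within `X × ℝ`. -/
def epiSet {E : Type*} (X : Set E) (f : E → EReal) : Set (E × ℝ) :=
  {p | p.1 ∈ X ∧ f p.1 ≤ ((p.2 : ℝ) : EReal)}

/-- The Attouch–Wets distance between `f` and `g` (epigraphs taken within `X × ℝ`,
with centre `zc`). -/
def awDist {E : Type*} [PseudoMetricSpace E] (X : Set E) (zc : E × ℝ)
    (f g : E → EReal) : ℝ :=
  ∫ ρ in Set.Ioi (0 : ℝ),
    (sSup ((fun z => |Metric.infDist z (epiSet X f) - Metric.infDist z (epiSet X g)|) ''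
      (Metric.closedBall zc ρ))) * Real.exp (-ρ)

/-- `f` is a lower semicontinuous function on `X`, not identically `∞`. -/
def LscFcnOn {E : Type*} [TopologicalSpace E] (X : Set E) (f : E → EReal) : Prop :=
  LowerSemicontinuousOn f X ∧ ∃ x ∈ X, f x ≠ ⊤

/-- `𝒱` is (sequentially) closed with respect to the Attouch–Wets distance. -/
def DlSeqClosed {E : Type*} [PseudoMetricSpace E] (X : Set E) (zc : E × ℝ)
    (𝒱 : Set (E → EReal)) : Prop :=
  ∀ Vs : ℕ → (E → EReal), (∀ ν, Vs ν ∈ 𝒱) → ∀ W, LscFcnOn X W →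
    Tendsto (fun ν => awDist X zc (Vs ν) W) atTop (𝓝 0) → W ∈ 𝒱

/-- `𝒱` is (sequentially) compact with respect to the Attouch–Wets distance. -/
def DlSeqCompact {E : Type*} [PseudoMetricSpace E] (X : Set E) (zc : E × ℝ)
    (𝒱 : Set (E → EReal)) : Prop :=
  ∀ Vs : ℕ → (E → EReal), (∀ ν, Vs ν ∈ 𝒱) → ∃ W ∈ 𝒱, ∃ φ : ℕ → ℕ,
    StrictMono φ ∧ Tendsto (fun κ => awDist X zc (Vs (φ κ)) W) atTop (𝓝 0)

/-- The outer limit, with respect to epi-convergence on `X`, of a sequence of sets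
of functions. -/
def EpiOuterLimit {E : Type*} [TopologicalSpace E] (X : Set E)
    (S : ℕ → Set (E → EReal)) : Set (E → EReal) :=
  {W | ∃ φ : ℕ → ℕ, StrictMono φ ∧ ∃ s : ℕ → (E → EReal),
    (∀ κ, s κ ∈ S (φ κ)) ∧ EpiConvergesOn X s W}

/-! ### Fatou's lemma under weak convergence -/

/-- Fatou's lemma for a weakly convergent sequence of measures and nonnegative integrands with
lower semicontinuous convergence in the joint variable `(ν, ω)`. The Lipschitz minorants
`h N ω = inf {min (g ν w) N + N * dist w ω | N ≤ ν}` transfer the limit to bounded continuous test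
functions, and their lower limit in `N` dominates `g`. -/
lemma lintegral_le_liminf_of_weakConv {Ω : Type*} [PseudoMetricSpace Ω] [MeasurableSpace Ω]
    [BorelSpace Ω] (P : Measure Ω) (Pν : ℕ → Measure Ω)
    [IsProbabilityMeasure P] [∀ ν, IsProbabilityMeasure (Pν ν)] (hweak : WeakConv Pν P)
    (G : ℕ → Ω → ENNReal) (g : Ω → ENNReal)
    (hlow : ∀ ω, ∀ c < g ω, ∀ᶠ p in atTop ×ˢ 𝓝 ω, c < G p.1 p.2) :
    ∫⁻ ω, g ω ∂P ≤ liminf (fun ν => ∫⁻ ω, G ν ω ∂(Pν ν)) atTop := by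
  classical
  set t : ℕ → ℕ × Ω → Ω → ℝ := fun N q ω =>
    (min (G (N + q.1) q.2) (N : ENNReal)).toReal + N * dist q.2 ω with ht
  set h : ℕ → Ω → ℝ := fun N ω => ⨅ q, t N q ω with hh
  have t_nonneg : ∀ N q ω, 0 ≤ t N q ω := fun N q ω => by positivity
  have bdd : ∀ N ω, BddBelow (range fun q => t N q ω) := fun N ω =>
    ⟨0, by rintro _ ⟨q, rfl⟩; exact t_nonneg N q ω⟩
  have h_nonneg : ∀ N ω, 0 ≤ h N ω := fun N ω => Real.iInf_nonneg fun q => t_nonneg N q ω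
  have h_le : ∀ N ν ω, N ≤ ν → h N ω ≤ (min (G ν ω) (N : ENNReal)).toReal := by
    intro N ν ω hν
    have := ciInf_le (bdd N ω) (ν - N, ω)
    simpa [ht, Nat.add_sub_cancel' hν] using this
  have h_leN : ∀ N ω, h N ω ≤ N := fun N ω => (h_le N N ω le_rfl).trans (by
    have := ENNReal.toReal_mono (b := (N : ENNReal)) (by simp) (min_le_right (G N ω) (N : ENNReal))
    simpa using this)
  have h_leG : ∀ N ν ω, N ≤ ν → ENNReal.ofReal (h N ω) ≤ G ν ω := fun N ν ω hν =>
    (ENNReal.ofReal_le_of_le_toReal (h_le N ν ω hν)).trans (min_le_left _ _)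
  have h_cont : ∀ N, Continuous (h N) := by
    intro N
    refine (LipschitzWith.of_le_add_mul (N : NNReal) fun ω ω' => ?_).continuous
    have : Nonempty Ω := ⟨ω⟩
    rw [← sub_le_iff_le_add]
    refine le_ciInf fun q => ?_
    have h1 : h N ω ≤ t N q ω := ciInf_le (bdd N ω) q
    have h2 : t N q ω ≤ t N q ω' + N * dist ω ω' := by
      simp only [ht]
      have := dist_triangle q.2 ω' ω
      rw [dist_comm ω' ω] at this
      nlinarith [mul_le_mul_of_nonneg_left this (Nat.cast_nonneg (α := ℝ) N)]
    rw [sub_le_iff_le_add]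
    simpa using h1.trans h2
  have key : ∀ ω, g ω ≤ liminf (fun N => ENNReal.ofReal (h N ω)) atTop := by
    intro ω
    refine le_of_forall_lt fun c hc => ?_
    obtain ⟨c', hcc', hc'⟩ := exists_between hc
    refine hcc'.trans_le ?_
    have c'top : c' ≠ ⊤ := ne_top_of_lt hc'
    refine le_liminf_of_le (by isBoundedDefault) ?_
    obtain ⟨pa, hpa, pb, hpb, hp⟩ := Filter.eventually_prod_iff.1 (hlow ω c' hc')
    obtain ⟨N0, hN0⟩ := eventually_atTop.1 hpa
    obtain ⟨δ, δpos, hδ⟩ := Metric.eventually_nhds_iff.1 hpb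
    have : Nonempty Ω := ⟨ω⟩
    filter_upwards [eventually_ge_atTop N0, eventually_ge_atTop (⌈c'.toReal⌉₊),
      eventually_ge_atTop (⌈c'.toReal / δ⌉₊)] with N h0 h1 h2
    have h1' := Nat.ceil_le.1 h1
    have h2' := Nat.ceil_le.1 h2
    rw [div_le_iff₀ δpos] at h2'
    rw [ENNReal.le_ofReal_iff_toReal_le c'top (h_nonneg N ω)]
    refine le_ciInf fun q => ?_
    simp only [ht]
    by_cases hd : dist q.2 ω < δ
    · have hG := hp (hN0 (N + q.1) (by omega)) (hδ hd)
      have : c'.toReal ≤ (min (G (N + q.1) q.2) (N : ENNReal)).toReal := by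
        refine ENNReal.toReal_mono (ne_top_of_le_ne_top (by simp) (min_le_right _ _))
          (le_min hG.le ?_)
        rw [← ENNReal.ofReal_toReal c'top, ← ENNReal.ofReal_natCast]
        exact ENNReal.ofReal_le_ofReal h1'
      have : 0 ≤ (N : ℝ) * dist q.2 ω := by positivity
      linarith
    · have : (N : ℝ) * δ ≤ N * dist q.2 ω :=
        mul_le_mul_of_nonneg_left (not_lt.1 hd) (Nat.cast_nonneg N)
      have : 0 ≤ (min (G (N + q.1) q.2) (N : ENNReal)).toReal := ENNReal.toReal_nonneg
      linarith
  have h_int : ∀ (Q : Measure Ω) [IsProbabilityMeasure Q] N, Integrable (h N) Q := by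
    intro Q _ N
    refine Integrable.of_bound (h_cont N).measurable.aestronglyMeasurable (N : ℝ)
      (Eventually.of_forall fun ω => ?_)
    rw [Real.norm_of_nonneg (h_nonneg N ω)]
    exact h_leN N ω
  have hN : ∀ N, ∫⁻ ω, ENNReal.ofReal (h N ω) ∂P ≤
      liminf (fun ν => ∫⁻ ω, G ν ω ∂(Pν ν)) atTop := by
    intro N
    have hlim : Tendsto (fun ν => ∫⁻ ω, ENNReal.ofReal (h N ω) ∂(Pν ν)) atTop
        (𝓝 (∫⁻ ω, ENNReal.ofReal (h N ω) ∂P)) := by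
      have := hweak (h N) (h_cont N) ⟨N, fun ω => by
        rw [abs_of_nonneg (h_nonneg N ω)]; exact h_leN N ω⟩
      have := (ENNReal.continuous_ofReal.tendsto _).comp this
      rw [ofReal_integral_eq_lintegral_ofReal (h_int P N)
        (Eventually.of_forall (h_nonneg N))] at this
      refine this.congr fun ν => ?_
      exact ofReal_integral_eq_lintegral_ofReal (h_int (Pν ν) N)
        (Eventually.of_forall (h_nonneg N))
    rw [← hlim.liminf_eq]
    refine liminf_le_liminf ?_
    filter_upwards [eventually_ge_atTop N] with ν hν
    exact lintegral_mono fun ω => h_leG N ν ω hν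
  calc ∫⁻ ω, g ω ∂P ≤ ∫⁻ ω, liminf (fun N => ENNReal.ofReal (h N ω)) atTop ∂P :=
        lintegral_mono key
    _ ≤ liminf (fun N => ∫⁻ ω, ENNReal.ofReal (h N ω) ∂P) atTop :=
        lintegral_liminf_le fun N => (h_cont N).measurable.ennreal_ofReal
    _ ≤ liminf (fun ν => ∫⁻ ω, G ν ω ∂(Pν ν)) atTop :=
        (liminf_le_liminf (Eventually.of_forall hN)).trans (by simp)

lemma erealToENN_eq (x : EReal) : erealToENN x = x.toENNReal := rfl

lemma EIntegrable.neg {Ω : Type*} [MeasurableSpace Ω] {P : Measure Ω} {g : Ω → EReal}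
    (h : EIntegrable P g) : EIntegrable P (fun ω => -g ω) :=
  ⟨h.1.neg, h.2.2, by simpa only [neg_neg] using h.2.1⟩

lemma EIntegrable.aemeasurable_erealToENN {Ω : Type*} [MeasurableSpace Ω] {P : Measure Ω}
    {g : Ω → EReal} (h : EIntegrable P g) : AEMeasurable (fun ω => erealToENN (g ω)) P :=
  h.1.ereal_toENNReal

lemma EIntegrable.eintegral_eq {Ω : Type*} [MeasurableSpace Ω] {P : Measure Ω} {g : Ω → EReal}
    (h : EIntegrable P g) : eintegral P g =
      (((∫⁻ ω, erealToENN (g ω) ∂P).toReal - (∫⁻ ω, erealToENN (-(g ω)) ∂P).toReal : ℝ) : EReal) := by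
  unfold eintegral
  rw [EReal.coe_sub, EReal.coe_ennreal_toReal h.2.1.ne, EReal.coe_ennreal_toReal h.2.2.ne]

lemma EIntegrable.eintegral_neg {Ω : Type*} [MeasurableSpace Ω] {P : Measure Ω} {g : Ω → EReal}
    (h : EIntegrable P g) : eintegral P (fun ω => -g ω) = -eintegral P g := by
  rw [h.neg.eintegral_eq, h.eintegral_eq]
  simp only [neg_neg]
  norm_cast
  ring

/-- `x⁺ + a ≤ (x + a)⁺ + x⁻`, written without subtraction so that it integrates in `ENNReal`. -/
lemma posPart_add_le (x : EReal) {a : ℝ} (ha : 0 ≤ a) :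
    erealToENN x + ENNReal.ofReal a ≤ erealToENN (x + a) + erealToENN (-x) := by
  simp only [erealToENN_eq]
  induction x with
  | bot => simp
  | top => simp
  | coe x =>
    rw [← EReal.coe_add, ← EReal.coe_neg]
    simp only [EReal.real_coe_toENNReal]
    rcases le_total 0 x with hx | hx
    · rw [← ENNReal.ofReal_add hx ha]
      exact le_self_add
    · rw [ENNReal.ofReal_of_nonpos hx, zero_add]
      refine (ENNReal.ofReal_le_ofReal ?_).trans ENNReal.ofReal_add_le
      linarith

/-- A reverse of `posPart_add_le`; the last summand is the part of `x` below `-a`. -/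
lemma shift_add_negPart_le (x : EReal) {a : ℝ} (ha : 0 ≤ a) :
    erealToENN (x + a) + erealToENN (-x) ≤ erealToENN x + ENNReal.ofReal a +
      erealToENN (-(if x ≤ ((-a : ℝ) : EReal) then x else 0)) := by
  simp only [erealToENN_eq]
  induction x with
  | bot => simp
  | top => simp
  | coe x =>
    rw [← EReal.coe_add, ← EReal.coe_neg]
    simp only [EReal.real_coe_toENNReal, EReal.coe_le_coe_iff]
    split_ifs with hx
    · rw [ENNReal.ofReal_of_nonpos (by linarith : x + a ≤ 0), zero_add, ← EReal.coe_neg]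
      exact le_add_self
    · push Not at hx
      rw [neg_zero, EReal.toENNReal_zero, add_zero]
      rcases le_total 0 x with h0 | h0
      · rw [ENNReal.ofReal_of_nonpos (by linarith : -x ≤ 0), ENNReal.ofReal_add h0 ha, add_zero]
      · rw [← ENNReal.ofReal_add (by linarith) (by linarith)]
        refine le_trans (ENNReal.ofReal_le_ofReal (by linarith)) le_add_self

/-- Fatou's lemma for extended-real integrands under weak convergence. The uniform smallness
`htail` of the lower tails plays the role of a common integrable minorant: after shifting by `a`,
only the positive part `(F ν + a)⁺` matters up to `ε`. -/
lemma eintegral_lower {Ω : Type*} [PseudoMetricSpace Ω] [MeasurableSpace Ω]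
    [BorelSpace Ω] (P : Measure Ω) (Pν : ℕ → Measure Ω)
    [IsProbabilityMeasure P] [∀ ν, IsProbabilityMeasure (Pν ν)] (hweak : WeakConv Pν P)
    (F : ℕ → Ω → EReal) (f : Ω → EReal)
    (hF : ∀ ν, EIntegrable (Pν ν) (F ν)) (hf : EIntegrable P f)
    (hlow : ∀ ω, ∀ c < f ω, ∀ᶠ p in atTop ×ˢ 𝓝 ω, c < F p.1 p.2)
    (htail : ∀ ε : ℝ, 0 < ε → ∃ a : ℝ, 0 ≤ a ∧ ∀ᶠ ν in atTop,
      ∫⁻ ω, erealToENN (-(truncBelow (F ν) (-a) ω)) ∂(Pν ν) ≤ ENNReal.ofReal ε) :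
    ∀ c < eintegral P f, ∀ᶠ ν in atTop, c < eintegral (Pν ν) (F ν) := by
  intro c hc
  rw [hf.eintegral_eq] at hc
  obtain ⟨k, hck, hk⟩ := EReal.lt_iff_exists_real_btwn.1 hc
  rw [EReal.coe_lt_coe_iff] at hk
  set A := ∫⁻ ω, erealToENN (f ω) ∂P with hA
  set B := ∫⁻ ω, erealToENN (-(f ω)) ∂P with hB
  set ε : ℝ := (A.toReal - B.toReal - k) / 2 with hε
  have εpos : 0 < ε := by rw [hε]; linarith
  obtain ⟨a, ha, hta⟩ := htail ε εpos
  set S := ∫⁻ ω, erealToENN (f ω + a) ∂P with hS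
  have hA1 : A + ENNReal.ofReal a ≤ S + B := by
    have := lintegral_mono (μ := P) fun ω => posPart_add_le (f ω) ha
    rw [lintegral_add_right _ measurable_const,
      lintegral_add_right' _ hf.neg.aemeasurable_erealToENN] at this
    simpa using this
  have hS1 : S ≤ A + ENNReal.ofReal a := by
    have := lintegral_mono (μ := P) fun ω => EReal.toENNReal_add_le (x := f ω) (y := a)
    rw [lintegral_add_right _ measurable_const] at this
    simpa [hS, hA, erealToENN_eq] using this
  have hSfin : S ≠ ⊤ := ne_top_of_le_ne_top (by simp [hf.2.1.ne, A]) hS1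
  have hfatou : S ≤ liminf (fun ν => ∫⁻ ω, erealToENN (F ν ω + a) ∂(Pν ν)) atTop := by
    refine lintegral_le_liminf_of_weakConv P Pν hweak _ _ fun ω c hc => ?_
    have lt_iff : ∀ x : EReal, c < erealToENN (x + a) ↔ ((c : EReal) - a) < x := by
      intro x
      rw [EReal.sub_lt_iff (by simp) (by simp), ← EReal.coe_ennreal_lt_coe_ennreal_iff,
        erealToENN_eq, EReal.coe_toENNReal_eq_max, lt_max_iff]
      simp [EReal.coe_ennreal_nonneg]
    filter_upwards [hlow ω _ ((lt_iff _).1 hc)] with p hp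
    exact (lt_iff _).2 hp
  have hev : ∀ᶠ ν in atTop, S ≤ ∫⁻ ω, erealToENN (F ν ω + a) ∂(Pν ν) + ENNReal.ofReal ε := by
    rcases eq_or_ne S 0 with h0 | h0
    · simp [h0]
    · have hlt : S - ENNReal.ofReal ε < liminf (fun ν => ∫⁻ ω, erealToENN (F ν ω + a) ∂(Pν ν)) atTop :=
        (ENNReal.sub_lt_self hSfin h0 (by simpa using εpos)).trans_le hfatou
      filter_upwards [eventually_lt_of_lt_liminf hlt] with ν hν
      exact tsub_le_iff_right.1 hν.le
  filter_upwards [hev, hta] with ν h1 h2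
  refine hck.trans_le ?_
  rw [(hF ν).eintegral_eq, EReal.coe_le_coe_iff]
  have hAfin := (hF ν).2.1.ne
  have hBfin := (hF ν).2.2.ne
  set Aν := ∫⁻ ω, erealToENN (F ν ω) ∂(Pν ν) with hAν
  set Bν := ∫⁻ ω, erealToENN (-(F ν ω)) ∂(Pν ν) with hBν
  set Sν := ∫⁻ ω, erealToENN (F ν ω + a) ∂(Pν ν) with hSν
  have h3 : Sν + Bν ≤ Aν + ENNReal.ofReal a + ENNReal.ofReal ε := by
    have := lintegral_mono (μ := Pν ν) fun ω => shift_add_negPart_le (F ν ω) ha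
    rw [lintegral_add_right' _ (hF ν).neg.aemeasurable_erealToENN,
      lintegral_add_left' ((hF ν).aemeasurable_erealToENN.add_const _),
      lintegral_add_right _ measurable_const] at this
    refine this.trans ?_
    simp only [lintegral_const, measure_univ, mul_one]
    gcongr
    exact h2
  have hSνfin : Sν ≠ ⊤ :=
    ne_top_of_le_ne_top (by simp [hAfin]) (le_self_add.trans h3)
  have r1 := ENNReal.toReal_mono (by simp [hSfin, hf.2.2.ne, B]) hA1
  have r2 := ENNReal.toReal_mono (by simp [hSνfin]) h1
  have r3 := ENNReal.toReal_mono (by simp [hAfin]) h3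
  rw [ENNReal.toReal_add hf.2.1.ne (by simp), ENNReal.toReal_add hSfin hf.2.2.ne,
    ENNReal.toReal_ofReal ha] at r1
  rw [ENNReal.toReal_add hSνfin (by simp), ENNReal.toReal_ofReal εpos.le] at r2
  rw [ENNReal.toReal_add hSνfin hBfin, ENNReal.toReal_add (by simp [hAfin]) (by simp),
    ENNReal.toReal_add hAfin (by simp),
    ENNReal.toReal_ofReal ha, ENNReal.toReal_ofReal εpos.le] at r3
  have : k = A.toReal - B.toReal - 2 * ε := by rw [hε]; ring
  linarith

/-! ### Attouch–Wets convergence implies epi-convergence -/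

/-- The integrand of the Attouch–Wets distance, without its exponential weight. -/
def awSup {E : Type*} [PseudoMetricSpace E] (X : Set E) (zc : E × ℝ) (f g : E → EReal) (ρ : ℝ) : ℝ :=
  sSup ((fun z => |Metric.infDist z (epiSet X f) - Metric.infDist z (epiSet X g)|) ''
      (Metric.closedBall zc ρ))

section AttouchWets

variable {E : Type*} [PseudoMetricSpace E] (X : Set E) (zc : E × ℝ) (f g : E → EReal)

lemma awDist_eq : awDist X zc f g = ∫ ρ in Set.Ioi (0 : ℝ), awSup X zc f g ρ * Real.exp (-ρ) := rfl

lemma awDist_self : awDist X zc f f = 0 := by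
  have : ∀ ρ, awSup X zc f f ρ = 0 := by
    intro ρ
    refine le_antisymm (Real.sSup_nonpos ?_) (Real.sSup_nonneg ?_)
    all_goals rintro _ ⟨z, -, rfl⟩; simp
  simp [awDist_eq, this]

lemma awDist_congr {g' : E → EReal} (h : ∀ x ∈ X, g x = g' x) :
    awDist X zc f g = awDist X zc f g' := by
  have : epiSet X g = epiSet X g' := by
    ext p
    change (_ ∧ _) ↔ (_ ∧ _)
    exact and_congr_right fun hp => by rw [h _ hp]
  simp [awDist, this]

lemma aw_bound {z : E × ℝ} {ρ : ℝ} (hz : z ∈ Metric.closedBall zc ρ) :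
    |Metric.infDist z (epiSet X f) - Metric.infDist z (epiSet X g)| ≤
      |Metric.infDist zc (epiSet X f) - Metric.infDist zc (epiSet X g)| + 2 * ρ := by
  have hz' : dist z zc ≤ ρ := hz
  have hz'' : dist zc z ≤ ρ := by rwa [dist_comm]
  have a1 := Metric.infDist_le_infDist_add_dist (s := epiSet X f) (x := z) (y := zc)
  have a2 := Metric.infDist_le_infDist_add_dist (s := epiSet X f) (x := zc) (y := z)
  have a3 := Metric.infDist_le_infDist_add_dist (s := epiSet X g) (x := z) (y := zc)
  have a4 := Metric.infDist_le_infDist_add_dist (s := epiSet X g) (x := zc) (y := z)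
  have b1 := le_abs_self (Metric.infDist zc (epiSet X f) - Metric.infDist zc (epiSet X g))
  have b2 := neg_abs_le (Metric.infDist zc (epiSet X f) - Metric.infDist zc (epiSet X g))
  rw [abs_le]
  constructor <;> linarith

lemma aw_bddAbove (ρ : ℝ) : BddAbove ((fun z =>
    |Metric.infDist z (epiSet X f) - Metric.infDist z (epiSet X g)|) '' (Metric.closedBall zc ρ)) :=
  ⟨_, by rintro _ ⟨z, hz, rfl⟩; exact aw_bound X zc f g hz⟩

lemma awSup_nonneg (ρ : ℝ) : 0 ≤ awSup X zc f g ρ :=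
  Real.sSup_nonneg (by rintro _ ⟨z, -, rfl⟩; exact abs_nonneg _)

lemma awSup_mono : Monotone (awSup X zc f g) := by
  intro ρ ρ' h
  refine Real.sSup_le ?_ (awSup_nonneg ..)
  rintro _ ⟨z, hz, rfl⟩
  exact le_csSup (aw_bddAbove ..) ⟨z, Metric.closedBall_subset_closedBall h hz, rfl⟩

lemma awSup_integrable :
    IntegrableOn (fun ρ => awSup X zc f g ρ * Real.exp (-ρ)) (Set.Ioi (0 : ℝ)) := by
  set c := |Metric.infDist zc (epiSet X f) - Metric.infDist zc (epiSet X g)| with hc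
  have hc0 : 0 ≤ c := abs_nonneg _
  have hint : IntegrableOn (fun ρ : ℝ => (c + 4) * Real.exp (-(1 / 2) * ρ)) (Set.Ioi (0 : ℝ)) :=
    (exp_neg_integrableOn_Ioi 0 (by norm_num)).const_mul _
  refine Integrable.mono' hint
    ((awSup_mono X zc f g).measurable.mul (by fun_prop)).aestronglyMeasurable ?_
  refine (ae_restrict_iff' measurableSet_Ioi).2 (Eventually.of_forall fun ρ hρ => ?_)
  have hρ : 0 < ρ := hρ
  rw [Real.norm_of_nonneg (mul_nonneg (awSup_nonneg ..) (Real.exp_nonneg _))]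
  have h1 : awSup X zc f g ρ ≤ c + 2 * ρ := by
    refine Real.sSup_le ?_ (by positivity)
    rintro _ ⟨z, hz, rfl⟩
    exact aw_bound X zc f g hz
  have h2 : c + 2 * ρ ≤ (c + 4) * Real.exp (ρ / 2) := by
    have := Real.add_one_le_exp (ρ / 2)
    nlinarith
  have h3 : Real.exp (-(1 / 2) * ρ) = Real.exp (ρ / 2) * Real.exp (-ρ) := by
    rw [← Real.exp_add]; congr 1; ring
  rw [h3, ← mul_assoc]
  exact mul_le_mul_of_nonneg_right (h1.trans h2) (Real.exp_nonneg _)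

/-- The Attouch–Wets distance controls the difference of distance functions at each point: the
supremum over balls is monotone in the radius, so the integrand is at least that difference times
`exp (-ρ)` for every `ρ > dist z zc`. -/
lemma infDist_le_awDist (z : E × ℝ) :
    |Metric.infDist z (epiSet X f) - Metric.infDist z (epiSet X g)| ≤
      Real.exp (dist z zc) * awDist X zc f g := by
  set R := dist z zc with hR
  set d := |Metric.infDist z (epiSet X f) - Metric.infDist z (epiSet X g)| with hd
  have hR0 : 0 ≤ R := dist_nonneg
  have hsub : Set.Ioi R ⊆ Set.Ioi 0 := Set.Ioi_subset_Ioi hR0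
  have h1 : d * Real.exp (-R) ≤ awDist X zc f g := by
    rw [awDist_eq, ← integral_exp_neg_Ioi R, ← integral_const_mul]
    refine le_trans ?_ (setIntegral_mono_set (awSup_integrable X zc f g) ?_ hsub.eventuallyLE)
    · refine setIntegral_mono_on ?_ ((awSup_integrable X zc f g).mono_set hsub) measurableSet_Ioi ?_
      · have := exp_neg_integrableOn_Ioi R (b := 1) (by norm_num)
        simp only [neg_mul, one_mul] at this
        exact this.const_mul d
      · intro ρ hρ
        refine mul_le_mul_of_nonneg_right ?_ (Real.exp_nonneg _)
        exact le_csSup (aw_bddAbove X zc f g ρ) ⟨z, (le_of_lt hρ : R ≤ ρ), rfl⟩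
    · exact Eventually.of_forall fun ρ => mul_nonneg (awSup_nonneg ..) (Real.exp_nonneg _)
  calc d = Real.exp R * (d * Real.exp (-R)) := by
        rw [mul_left_comm, ← Real.exp_add]; simp
    _ ≤ _ := mul_le_mul_of_nonneg_left h1 (Real.exp_nonneg _)

variable {X f}

lemma epiSet_nonempty (hf : LscFcnOn X f) : (epiSet X f).Nonempty := by
  obtain ⟨x, hx, hfx⟩ := hf.2
  exact ⟨(x, (f x).toReal), hx, EReal.le_coe_toReal hfx⟩

lemma epiSet_isClosed (hX : IsClosed X) (hf : LscFcnOn X f) : IsClosed (epiSet X f) := by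
  rw [← isOpen_compl_iff, isOpen_iff_mem_nhds]
  rintro ⟨x, r⟩ hp
  by_cases hx : x ∈ X
  · have hlt : (r : EReal) < f x := by
      by_contra h
      exact hp ⟨hx, not_lt.1 h⟩
    obtain ⟨k, hrk, hk⟩ := EReal.lt_iff_exists_real_btwn.1 hlt
    have h1 := eventually_nhdsWithin_iff.1 (hf.1 x hx k hk)
    have h2 : ∀ᶠ s in 𝓝 r, s < k := eventually_lt_nhds (EReal.coe_lt_coe_iff.1 hrk)
    rw [nhds_prod_eq]
    filter_upwards [h1.prod_mk h2] with p hp hpe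
    have : (k : EReal) < (p.2 : EReal) := (hp.1 hpe.1).trans_le hpe.2
    exact absurd hp.2 (not_lt.2 (EReal.coe_lt_coe_iff.1 this).le)
  · filter_upwards [(hX.isOpen_compl.preimage continuous_fst).mem_nhds hx] with p hp hpe
    exact hp hpe.1

end AttouchWets

/-- A diagonal sequence for a decreasing family of eventually satisfiable conditions. -/
lemma exists_diagonal {α : Type*} [Nonempty α] (p : ℕ → ℕ → α → Prop)
    (hanti : ∀ i j ν w, i ≤ j → p j ν w → p i ν w)
    (hev : ∀ j, ∀ᶠ ν in atTop, ∃ w, p j ν w) (h0 : ∀ ν, ∃ w, p 0 ν w) :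
    ∃ u : ℕ → α, ∀ j, ∀ᶠ ν in atTop, p j ν (u ν) := by
  classical
  have h : ∀ ν, ∃ w, p (Nat.findGreatest (fun j => ∃ w, p j ν w) ν) ν w := fun ν =>
    Nat.findGreatest_spec (P := fun j => ∃ w, p j ν w) (Nat.zero_le ν) (h0 ν)
  choose u hu using h
  refine ⟨u, fun j => ?_⟩
  filter_upwards [hev j, eventually_ge_atTop j] with ν h1 h2
  exact hanti _ _ _ _ (Nat.le_findGreatest h2 h1) (hu ν)

lemma epiConvergesOn_of_awDist {E : Type*} [PseudoMetricSpace E] {X : Set E} (hX : IsClosed X)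
    (zc : E × ℝ) {F : ℕ → E → EReal} {f : E → EReal} (hF : ∀ ν, LscFcnOn X (F ν))
    (hf : LscFcnOn X f) (h : Tendsto (fun ν => awDist X zc (F ν) f) atTop (𝓝 0)) :
    EpiConvergesOn X F f := by
  have hdist : ∀ z : E × ℝ, Tendsto (fun ν => Metric.infDist z (epiSet X (F ν))) atTop
      (𝓝 (Metric.infDist z (epiSet X f))) := by
    intro z
    rw [tendsto_iff_dist_tendsto_zero]
    refine squeeze_zero (fun _ => dist_nonneg) (fun ν => ?_)
      (by simpa using h.const_mul (Real.exp (dist z zc)))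
    rw [Real.dist_eq]
    exact infDist_le_awDist X zc (F ν) f z
  intro z hz
  constructor
  · intro zs hzs hlim
    refine le_of_forall_lt fun c hc => ?_
    obtain ⟨k, hck, hk⟩ := EReal.lt_iff_exists_real_btwn.1 hc
    refine hck.trans_le (le_liminf_of_le (by isBoundedDefault) ?_)
    have hpos : 0 < Metric.infDist (z, k) (epiSet X f) := by
      rw [← (epiSet_isClosed hX hf).notMem_iff_infDist_pos (epiSet_nonempty hf)]
      exact fun hmem => absurd hk (not_lt.2 hmem.2)
    have e1 := (hdist (z, k)).eventually (lt_mem_nhds (half_lt_self hpos))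
    have e2 := (Metric.tendsto_nhds.1 hlim) _ (half_pos hpos)
    filter_upwards [e1, e2] with ν h1 h2
    by_contra hlt
    have hmem : (zs ν, k) ∈ epiSet X (F ν) := ⟨hzs ν, (not_le.1 hlt).le⟩
    have h3 := Metric.infDist_le_dist_of_mem (x := (z, k)) hmem
    have h4 : dist (z, k) (zs ν, k) = dist (zs ν) z := by
      rw [Prod.dist_eq]; simp [dist_comm]
    linarith
  · rcases eq_or_ne (f z) ⊤ with htop | htop
    · exact ⟨fun _ => z, fun _ => hz, tendsto_const_nhds, by simp [htop]⟩
    obtain ⟨c, hcanti, hcmem, hclim⟩ := exists_seq_strictAnti_tendsto' (lt_top_iff_ne_top.2 htop)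
    have : Nonempty E := ⟨z⟩
    -- The condition at `j = 0` is only `w ∈ X`, so that it is satisfiable for every `ν`.
    obtain ⟨u, hu⟩ := exists_diagonal
      (fun j ν w => w ∈ X ∧ (0 < j → dist w z < 1 / (j : ℝ) ∧ F ν w < c j))
      (fun i j ν w hij hp => ⟨hp.1, fun hi => by
        have hj := hi.trans_le hij
        refine ⟨(hp.2 hj).1.trans_le ?_, (hp.2 hj).2.trans_le (hcanti.antitone hij)⟩
        exact one_div_le_one_div_of_le (by exact_mod_cast hi) (by exact_mod_cast hij)⟩)
      (fun j => by
        obtain ⟨r, hr, hrc⟩ := EReal.lt_iff_exists_real_btwn.1 (hcmem j).1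
        obtain ⟨s, hrs, hs⟩ := EReal.lt_iff_exists_real_btwn.1 hrc
        have hrs := EReal.coe_lt_coe_iff.1 hrs
        have hmem : (z, r) ∈ epiSet X f := ⟨hz, hr.le⟩
        have h0 := hdist (z, r)
        rw [Metric.infDist_zero_of_mem hmem] at h0
        have hδ : 0 < min (s - r) (1 / ((j : ℝ) + 1)) :=
          lt_min (by linarith) (by positivity)
        filter_upwards [h0.eventually (gt_mem_nhds hδ)] with ν hν
        obtain ⟨p, hp, hpd⟩ := (Metric.infDist_lt_iff (epiSet_nonempty (hF ν))).1 hν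
        rw [Prod.dist_eq, max_lt_iff, lt_min_iff, lt_min_iff] at hpd
        refine ⟨p.1, hp.1, fun hj => ⟨?_, hp.2.trans_lt (lt_trans ?_ hs)⟩⟩
        · rw [dist_comm]
          refine hpd.1.2.trans_le (one_div_le_one_div_of_le (by exact_mod_cast hj) (by linarith))
        · rw [EReal.coe_lt_coe_iff]
          have := hpd.2.1
          rw [Real.dist_eq, abs_sub_comm] at this
          have := (le_abs_self _).trans_lt this
          simp only at this
          linarith)
      (fun ν => ⟨z, hz, fun h => absurd h (lt_irrefl _)⟩)
    have hu0 : ∀ ν, ∃ w ∈ X, (u ν ∈ X → w = u ν) := fun ν => by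
      by_cases hν : u ν ∈ X
      · exact ⟨u ν, hν, fun _ => rfl⟩
      · exact ⟨z, hz, fun h => absurd h hν⟩
    choose w hwX hwu using hu0
    have hw : ∀ j : ℕ, 0 < j → ∀ᶠ ν in atTop, dist (w ν) z < 1 / (j : ℝ) ∧ F ν (w ν) < c j := by
      intro j hj
      filter_upwards [hu j] with ν hν
      rw [hwu ν hν.1]
      exact hν.2 hj
    refine ⟨w, hwX, ?_, ?_⟩
    · rw [Metric.tendsto_nhds]
      intro ε hε
      obtain ⟨j, hj⟩ := exists_nat_one_div_lt hε
      filter_upwards [hw (j + 1) (Nat.succ_pos j)] with ν hν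
      refine hν.1.trans (by exact_mod_cast hj)
    · refine ge_of_tendsto hclim ?_
      filter_upwards [eventually_gt_atTop 0] with j hj
      exact limsup_le_of_le (by isBoundedDefault) ((hw j hj).mono fun ν hν => hν.2.le)

/-! ### Epi-convergence in neighbourhood form and equi-semicontinuity -/

/-- Filling the indices missed by a subsequence with a constant preserves the limit. -/
lemma tendsto_extend {α : Type*} {l : Filter α} {a : α} (hl : pure a ≤ l) {ψ : ℕ → ℕ}
    (hψ : StrictMono ψ) {u : ℕ → α} (hu : Tendsto u atTop l) :
    Tendsto (Function.extend ψ u fun _ => a) atTop l := by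
  intro s hs
  obtain ⟨K, hK⟩ := eventually_atTop.1 (hu hs)
  refine mem_map.2 ?_
  filter_upwards [eventually_ge_atTop (ψ K)] with ν hν
  by_cases h : ∃ k, ψ k = ν
  · obtain ⟨k, rfl⟩ := h
    rw [mem_preimage, hψ.injective.extend_apply]
    exact hK k (hψ.le_iff_le.1 hν)
  · rw [mem_preimage, Function.extend_apply' _ _ _ h]
    exact hl hs

/-- The lower half of epi-convergence, stated for `(ν, w)` jointly. -/
lemma EpiConvergesOn.eventually_lt {E : Type*} [TopologicalSpace E] [FirstCountableTopology E]
    {Z : Set E} {F : ℕ → E → EReal} {f : E → EReal} (h : EpiConvergesOn Z F f) {z : E}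
    (hz : z ∈ Z) {c : EReal} (hc : c < f z) : ∀ᶠ p in atTop ×ˢ 𝓝[Z] z, c < F p.1 p.2 := by
  by_contra hcon
  have hfr : ∃ᶠ p in atTop ×ˢ 𝓝[Z] z, p.2 ∈ Z ∧ F p.1 p.2 ≤ c := by
    refine ((not_eventually.1 hcon).and_eventually
      (tendsto_snd.eventually eventually_mem_nhdsWithin)).mono ?_
    exact fun p hp => ⟨hp.2, not_lt.1 hp.1⟩
  obtain ⟨q, hq, hqp⟩ := exists_seq_forall_of_frequently hfr
  obtain ⟨θ, hθ, hψ⟩ := strictMono_subseq_of_tendsto_atTop (tendsto_fst.comp hq)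
  set ψ : ℕ → ℕ := (Prod.fst ∘ q) ∘ θ with hψdef
  set u : ℕ → E := fun k => (q (θ k)).2 with hu
  set zs := Function.extend ψ u fun _ => z with hzs
  have hzZ : ∀ ν, zs ν ∈ Z := by
    intro ν
    by_cases hν : ∃ k, ψ k = ν
    · obtain ⟨k, rfl⟩ := hν
      rw [hzs, hψ.injective.extend_apply]
      exact (hqp (θ k)).1
    · rw [hzs, Function.extend_apply' _ _ _ hν]
      exact hz
  have hulim : Tendsto u atTop (𝓝 z) :=
    tendsto_nhdsWithin_iff.1 ((tendsto_snd.comp hq).comp hθ.tendsto_atTop) |>.1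
  have h1 := (h z hz).1 zs hzZ (tendsto_extend (pure_le_nhds z) hψ hulim)
  have h2 := hψ.tendsto_atTop.eventually (eventually_lt_of_lt_liminf (hc.trans_le h1))
  obtain ⟨k, hk⟩ := h2.exists
  rw [hzs, hψ.injective.extend_apply] at hk
  exact absurd hk (not_lt.2 (hqp (θ k)).2)

/-- Equi-lower semicontinuity upgrades a pointwise lower bound to a locally uniform one. -/
lemma EquiLscOn.eventually_lt {E : Type*} [PseudoMetricSpace E] {Z : Set E} {F : ℕ → E → EReal}
    (h : EquiLscOn Z F) {z : E} (hz : z ∈ Z) {l : EReal}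
    (hl : ∀ c < l, ∀ᶠ ν in atTop, c < F ν z) {c : EReal} (hc : c < l) :
    ∀ᶠ p in atTop ×ˢ 𝓝[Z] z, c < F p.1 p.2 := by
  obtain ⟨k, hck, hkl⟩ := EReal.lt_iff_exists_real_btwn.1 hc
  obtain ⟨k', hkk', hk'l⟩ := EReal.lt_iff_exists_real_btwn.1 hkl
  have hkk' := EReal.coe_lt_coe_iff.1 hkk'
  rcases h z hz with hbot | hequi
  · have : (k' : EReal) ≤ limsup (fun ν => F ν z) atTop :=
      le_limsup_of_frequently_le ((hl _ hk'l).mono fun ν hν => hν.le).frequently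
        (by isBoundedDefault)
    rw [hbot] at this
    simp at this
  · obtain ⟨N, δ, hδ, hN⟩ := hequi (|k| + 1) (k' - k) (by positivity) (by linarith)
    have e1 : ∀ᶠ ν in atTop, N ≤ ν ∧ (k' : EReal) < F ν z :=
      (eventually_ge_atTop N).and (hl _ hk'l)
    have e2 : ∀ᶠ w in 𝓝[Z] z, w ∈ Z ∧ dist w z ≤ δ :=
      eventually_mem_nhdsWithin.and
        (nhdsWithin_le_nhds (Metric.closedBall_mem_nhds z hδ))
    filter_upwards [e1.prod_mk e2] with p ⟨⟨hp1, hp2⟩, hp3, hp4⟩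
    have h1 := (hN p.1 hp1).trans (iInf_le_of_le p.2 (iInf_le_of_le hp3 (iInf_le _ hp4)))
    refine hck.trans_le (le_trans (le_min ?_ ?_) h1)
    · have : ((k : ℝ) : EReal) = (k' : EReal) - ((k' - k : ℝ) : EReal) := by
        rw [← EReal.coe_sub]; congr 1; ring
      rw [this]
      exact EReal.sub_le_sub hp2.le le_rfl
    · rw [EReal.coe_le_coe_iff]
      linarith [le_abs_self k]

/-- Epi-convergence of an equi-lower semicontinuous sequence forces pointwise convergence. -/
lemma EpiConvergesOn.tendsto {E : Type*} [PseudoMetricSpace E] {Z : Set E} {F : ℕ → E → EReal}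
    {f : E → EReal} (h : EpiConvergesOn Z F f) (he : EquiLscOn Z F) {z : E} (hz : z ∈ Z) :
    Tendsto (fun ν => F ν z) atTop (𝓝 (f z)) := by
  refine tendsto_of_le_liminf_of_limsup_le ((h z hz).1 (fun _ => z) (fun _ => hz)
    tendsto_const_nhds) ?_
  obtain ⟨zs, hzs, hlim, hsup⟩ := (h z hz).2
  rcases he z hz with hbot | hequi
  · rw [hbot]; exact bot_le
  refine le_of_forall_gt fun c hc => ?_
  obtain ⟨k', hk', hk'c⟩ := EReal.lt_iff_exists_real_btwn.1 hc
  obtain ⟨k, hk, hkk'⟩ := EReal.lt_iff_exists_real_btwn.1 hk'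
  have hkk' := EReal.coe_lt_coe_iff.1 hkk'
  refine lt_of_le_of_lt (limsup_le_of_le (by isBoundedDefault) ?_) hk'c
  obtain ⟨N, δ, hδ, hN⟩ := hequi (|k| + 1) (k' - k) (by positivity) (by linarith)
  filter_upwards [eventually_ge_atTop N, hlim.eventually (Metric.closedBall_mem_nhds z hδ),
    eventually_lt_of_limsup_lt (hsup.trans_lt hk)] with ν h1 h2 h3
  have h4 := ((hN ν h1).trans (iInf_le_of_le (zs ν) (iInf_le_of_le (hzs ν)
    (iInf_le _ h2)))).trans_lt h3
  rcases min_lt_iff.1 h4 with h5 | h5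
  · have h6 := (EReal.sub_lt_iff (.inl (EReal.coe_ne_bot _)) (.inl (EReal.coe_ne_top _))).1 h5
    rw [← EReal.coe_add] at h6
    refine h6.le.trans (le_of_eq ?_)
    congr 1; ring
  · rw [EReal.coe_lt_coe_iff] at h5
    linarith [le_abs_self k]

/-! ### Parametric minimization -/

lemma add_mul_lower {ι : Type*} {l : Filter ι} {β : ℝ} (hβ : 0 < β) {u : ι → ℝ} {v : ι → EReal}
    {r : ℝ} {w : EReal} (hu : ∀ c < (r : EReal), ∀ᶠ i in l, c < (u i : EReal))
    (hv : ∀ c < w, ∀ᶠ i in l, c < v i) {c : EReal} (hc : c < (r : EReal) + (β : EReal) * w) :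
    ∀ᶠ i in l, c < (u i : EReal) + (β : EReal) * v i := by
  obtain ⟨k, hck, hk⟩ := EReal.lt_iff_exists_real_btwn.1 hc
  have hlt : (((k - r) / β : ℝ) : EReal) < w := by
    induction w with
    | bot => simp [EReal.coe_mul_bot_of_pos hβ] at hk
    | top => exact EReal.coe_lt_top _
    | coe w =>
      rw [← EReal.coe_mul, ← EReal.coe_add, EReal.coe_lt_coe_iff] at hk
      rw [EReal.coe_lt_coe_iff, div_lt_iff₀ hβ]
      linarith
  obtain ⟨M, hM, hMw⟩ := EReal.lt_iff_exists_real_btwn.1 hlt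
  rw [EReal.coe_lt_coe_iff, div_lt_iff₀ hβ] at hM
  have hd : ((k - β * M : ℝ) : EReal) < (r : EReal) := by
    rw [EReal.coe_lt_coe_iff]; linarith
  filter_upwards [hu _ hd, hv _ hMw] with i h1 h2
  refine hck.trans_le ?_
  rw [EReal.coe_lt_coe_iff] at h1
  calc (k : EReal) ≤ (u i : EReal) + (β : EReal) * (M : EReal) := by
        rw [← EReal.coe_mul, ← EReal.coe_add, EReal.coe_le_coe_iff]; linarith
    _ ≤ _ := by
        gcongr

lemma add_mul_tendsto {ι : Type*} {l : Filter ι} {β : ℝ} {u : ι → ℝ} {v : ι → EReal}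
    {r : ℝ} {w : EReal} (hu : Tendsto u l (𝓝 r)) (hv : Tendsto v l (𝓝 w)) :
    Tendsto (fun i => (u i : EReal) + (β : EReal) * v i) l
      (𝓝 ((r : EReal) + (β : EReal) * w)) := by
  have h1 : Tendsto (fun i => (β : EReal) * v i) l (𝓝 ((β : EReal) * w)) :=
    EReal.Tendsto.const_mul hv (by simp) (by simp)
  have h2 : Tendsto (fun i => (u i : EReal)) l (𝓝 (r : EReal)) :=
    (continuous_coe_real_ereal.tendsto r).comp hu
  exact (EReal.continuousAt_add (by simp) (by simp)).tendsto.comp (h2.prodMk_nhds h1)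

lemma iInf_upper {E : Type*} {X K : Set E} {G : ℕ → E → EReal} {g : E → EReal} (hKX : K ⊆ X) (hpt : ∀ y ∈ X, Tendsto (fun ν => G ν y) atTop (𝓝 (g y)))
    {c : EReal} (hc : (⨅ (y : E) (_ : y ∈ K), g y) < c) :
    ∀ᶠ ν in atTop, (⨅ (y : E) (_ : y ∈ K), G ν y) < c := by
  simp only [iInf_lt_iff] at hc
  obtain ⟨y, hy, hyc⟩ := hc
  exact ((hpt y (hKX hy)).eventually (gt_mem_nhds hyc)).mono fun ν hν =>
    (iInf₂_le y hy).trans_lt hν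

section Parametric

variable {E : Type*} [MetricSpace E] {X K : Set E} {G : ℕ → E → EReal} {g : E → EReal}

lemma iInf_lower (hK : IsCompact K) (hKX : K ⊆ X)
    (hlow : ∀ y ∈ X, ∀ c < g y, ∀ᶠ p in atTop ×ˢ 𝓝[X] y, c < G p.1 p.2) {c : EReal}
    (hc : c < ⨅ (y : E) (_ : y ∈ K), g y) : ∀ᶠ ν in atTop, c < ⨅ (y : E) (_ : y ∈ K), G ν y := by
  obtain ⟨c', hcc', hc'⟩ := exists_between hc
  have : ∀ᶠ ν in (atTop : Filter ℕ), ∀ y ∈ K, c' < G ν y := by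
    refine hK.induction_on (p := fun s => ∀ᶠ ν in (atTop : Filter ℕ), ∀ y ∈ s, c' < G ν y)
      (by simp) (fun s t hst ht => ht.mono fun ν hν y hy => hν y (hst hy)) ?_ ?_
    · intro s t hs ht
      filter_upwards [hs, ht] with ν h1 h2 y hy
      exact hy.elim (h1 y) (h2 y)
    · intro y hy
      have := hlow y (hKX hy) c' (hc'.trans_le (iInf₂_le y hy))
      obtain ⟨pa, hpa, pb, hpb, hp⟩ := Filter.eventually_prod_iff.1 this
      exact ⟨{w | pb w}, nhdsWithin_mono y hKX hpb, hpa.mono fun ν hν w hw => hp hν hw⟩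
  exact this.mono fun ν hν => hcc'.trans_le (le_iInf₂ fun y hy => (hν y hy).le)

lemma outerLimit_argmin_subset (hK : IsCompact K) (hKX : K ⊆ X)
    (hlow : ∀ y ∈ X, ∀ c < g y, ∀ᶠ p in atTop ×ˢ 𝓝[X] y, c < G p.1 p.2)
    (hpt : ∀ y ∈ X, Tendsto (fun ν => G ν y) atTop (𝓝 (g y))) :
    OuterLimit (fun ν => ArgminOn K (G ν)) ⊆ ArgminOn K g := by
  rintro y ⟨ψ, hψ, s, hs, hlim⟩
  have hy : y ∈ K := hK.isClosed.mem_of_tendsto hlim (Eventually.of_forall fun κ => (hs κ).1)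
  refine ⟨hy, fun z hz => le_of_forall_lt fun c hc => ?_⟩
  obtain ⟨c', hcc', hc'⟩ := exists_between hc
  refine hcc'.trans_le (ge_of_tendsto ((hpt z (hKX hz)).comp hψ.tendsto_atTop) ?_)
  have hs' : Tendsto s atTop (𝓝[X] y) :=
    tendsto_nhdsWithin_iff.2 ⟨hlim, Eventually.of_forall fun κ => hKX (hs κ).1⟩
  filter_upwards [(hψ.tendsto_atTop.prodMk hs').eventually (hlow y (hKX hy) c' hc')] with κ hκ
  exact hκ.le.trans ((hs κ).2 z hz)

lemma argmin_nonempty (hK : IsCompact K) (hne : K.Nonempty) (hKX : K ⊆ X)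
    (hlow : ∀ y ∈ X, ∀ c < g y, ∀ᶠ p in atTop ×ˢ 𝓝[X] y, c < G p.1 p.2)
    (hpt : ∀ y ∈ X, Tendsto (fun ν => G ν y) atTop (𝓝 (g y))) :
    (ArgminOn K g).Nonempty := by
  have hlsc : LowerSemicontinuousOn g K := by
    intro y hy c hc
    obtain ⟨c', hcc', hc'⟩ := exists_between hc
    obtain ⟨pa, hpa, pb, hpb, hp⟩ := Filter.eventually_prod_iff.1 (hlow y (hKX hy) c' hc')
    filter_upwards [nhdsWithin_mono y hKX hpb, eventually_mem_nhdsWithin] with w hw hwK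
    exact hcc'.trans_le (ge_of_tendsto (hpt w (hKX hwK)) (hpa.mono fun ν hν => (hp hν hw).le))
  obtain ⟨y, hy, hmin⟩ := hlsc.exists_isMinOn hne hK
  exact ⟨y, hy, fun z hz => hmin hz⟩

end Parametric

/-! ### Tail conditions -/

/-- Asymptotic inf-integrability, read off at the base point, in the form used by
`eintegral_lower`. -/
lemma tail_lower {E Ω : Type*} [PseudoMetricSpace E] [MeasurableSpace Ω] {Pν : ℕ → Measure Ω}
    {X : Set E} {xb : E} (hxb : xb ∈ X) {h : ℕ → E → Ω → EReal}
    (hh : liminfAlphaBot (fun α => liminfNuX X xb (fun ν x =>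
        eintegral (Pν ν) (truncBelow (h ν x) α))) = 0) (ε : ℝ) (hε : 0 < ε) :
    ∃ a : ℝ, 0 ≤ a ∧ ∀ᶠ ν in atTop,
      ∫⁻ ω, erealToENN (-(truncBelow (h ν xb) (-a) ω)) ∂(Pν ν) ≤ ENNReal.ofReal ε := by
  have hlt : ((-ε : ℝ) : EReal) < liminfAlphaBot (fun α => liminfNuX X xb (fun ν x =>
        eintegral (Pν ν) (truncBelow (h ν x) α))) := by
    rw [hh]; exact_mod_cast neg_lt_zero.2 hε
  simp only [liminfAlphaBot, lt_iSup_iff] at hlt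
  obtain ⟨αb, hαb⟩ := hlt
  refine ⟨-(min αb 0), by simp, ?_⟩
  have h1 := hαb.trans_le (iInf₂_le (min αb 0) (min_le_left αb 0))
  simp only [liminfNuX, lt_iSup_iff] at h1
  obtain ⟨δ, hδ, N, hN⟩ := h1
  filter_upwards [eventually_ge_atTop N] with ν hν
  have h2 := hN.trans_le (iInf_le_of_le ν (iInf_le_of_le hν (iInf_le_of_le xb
    (iInf_le_of_le hxb (iInf_le _ (by simpa using hδ.le))))))
  rw [neg_neg]
  have h3 : ∀ ω, erealToENN (truncBelow (h ν xb) (min αb 0) ω) = 0 := by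
    intro ω
    refine EReal.toENNReal_of_nonpos ?_
    unfold truncBelow
    split_ifs with h
    · exact h.trans (by exact_mod_cast min_le_right αb 0)
    · exact le_rfl
  simp only [eintegral, h3, lintegral_zero, EReal.coe_ennreal_zero, zero_sub] at h2
  rw [EReal.coe_neg, EReal.neg_lt_neg_iff] at h2
  rw [← EReal.coe_ennreal_le_coe_ennreal_iff, EReal.coe_ennreal_ofReal, max_eq_left hε.le]
  exact h2.le

/-- Asymptotic sup-integrability of `h` in the form used by `eintegral_lower` for `-h`. -/
lemma tail_upper {Ω : Type*} [MeasurableSpace Ω] {Pν : ℕ → Measure Ω} {h : ℕ → Ω → EReal}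
    (hh : limsupAlphaTop (fun α => limsupNu (fun ν =>
        eintegral (Pν ν) (truncAbove (h ν) α))) = 0) (ε : ℝ) (hε : 0 < ε) :
    ∃ a : ℝ, 0 ≤ a ∧ ∀ᶠ ν in atTop,
      ∫⁻ ω, erealToENN (-(truncBelow (fun ω => -h ν ω) (-a) ω)) ∂(Pν ν) ≤ ENNReal.ofReal ε := by
  have hlt : limsupAlphaTop (fun α => limsupNu (fun ν =>
        eintegral (Pν ν) (truncAbove (h ν) α))) < ((ε : ℝ) : EReal) := by
    rw [hh]; exact_mod_cast hε
  simp only [limsupAlphaTop, iInf_lt_iff] at hlt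
  obtain ⟨αb, hαb⟩ := hlt
  refine ⟨max αb 0, by simp, ?_⟩
  have h1 := (le_iSup₂ (f := fun α (_ : αb ≤ α) => limsupNu (fun ν =>
        eintegral (Pν ν) (truncAbove (h ν) α))) (max αb 0) (le_max_left _ _)).trans_lt hαb
  simp only [limsupNu, iInf_lt_iff] at h1
  obtain ⟨N, hN⟩ := h1
  filter_upwards [eventually_ge_atTop N] with ν hν
  have h2 := (le_iSup₂ (f := fun ν (_ : N ≤ ν) =>
        eintegral (Pν ν) (truncAbove (h ν) (max αb 0))) ν hν).trans_lt hN
  have h3 : ∀ ω, erealToENN (-(truncAbove (h ν) (max αb 0) ω)) = 0 := by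
    intro ω
    refine EReal.toENNReal_of_nonpos ?_
    unfold truncAbove
    split_ifs with h
    · rw [EReal.neg_le, neg_zero]
      exact le_trans (by exact_mod_cast le_max_right αb 0) h
    · simp
  have h4 : ∀ ω, -(truncBelow (fun ω => -h ν ω) (-(max αb 0)) ω) =
      truncAbove (h ν) (max αb 0) ω := by
    intro ω
    simp only [truncBelow, truncAbove, EReal.coe_neg, EReal.neg_le_neg_iff]
    split_ifs <;> simp
  simp only [eintegral, h3, lintegral_zero, EReal.coe_ennreal_zero, sub_zero] at h2
  simp only [h4]
  rw [← EReal.coe_ennreal_le_coe_ennreal_iff, EReal.coe_ennreal_ofReal, max_eq_left hε.le]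
  exact h2.le

/-- Consistency of approximating decision rules under a unique fixed
point. -/
theorem decision_rule_consistency_unique_fixed_point {n m : ℕ}
    (X : Set (EuclideanSpace ℝ (Fin n))) (hX : IsClosed X)
    (Ξ : Set (EuclideanSpace ℝ (Fin m))) (hΞ : IsClosed Ξ)
    (Y : EuclideanSpace ℝ (Fin n) → Ξ → Set (EuclideanSpace ℝ (Fin n)))
    (hY : ∀ x ∈ X, ∀ ξ : Ξ, (Y x ξ).Nonempty ∧ IsCompact (Y x ξ) ∧ Y x ξ ⊆ X)
    (β : ℝ) (hβ : β ∈ Set.Ioo (0 : ℝ) 1)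
    (φ : EuclideanSpace ℝ (Fin n) → EuclideanSpace ℝ (Fin n) → Ξ → ℝ)
    (φν : ℕ → EuclideanSpace ℝ (Fin n) → EuclideanSpace ℝ (Fin n) → Ξ → ℝ)
    (P : Measure Ξ) (Pν : ℕ → Measure Ξ)
    [IsProbabilityMeasure P] [∀ ν, IsProbabilityMeasure (Pν ν)]
    (zc : EuclideanSpace ℝ (Fin n) × ℝ)
    (𝒱 : Set (EuclideanSpace ℝ (Fin n) → EReal))
    (h𝒱lsc : ∀ V ∈ 𝒱, LscFcnOn X V)
    -- Assumption 2
    (hA2 : ∀ V ∈ 𝒱, (∀ x ∈ X, EIntegrable P (bop Y β φ V x)) ∧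
      (fun x => eintegral P (bop Y β φ V x)) ∈ 𝒱)
    (hA2ν : ∀ ν, ∀ V ∈ 𝒱, (∀ x ∈ X, EIntegrable (Pν ν) (bop Y β (φν ν) V x)) ∧
      (fun x => eintegral (Pν ν) (bop Y β (φν ν) V x)) ∈ 𝒱)
    -- 𝒱 is closed under the Attouch–Wets distance
    (h𝒱closed : DlSeqClosed X zc 𝒱)
    -- convergence of the data
    (hweak : WeakConv Pν P)
    (hφe : EpiConvergesOn (X ×ˢ X ×ˢ (univ : Set Ξ))
      (fun ν p => ((φν ν p.1 p.2.1 p.2.2 : ℝ) : EReal))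
      (fun p => ((φ p.1 p.2.1 p.2.2 : ℝ) : EReal)))
    (hφp : ∀ x ∈ X, ∀ y ∈ X, ∀ ξ : Ξ,
      Tendsto (fun ν => φν ν x y ξ) atTop (𝓝 (φ x y ξ)))
    -- every epi-convergent sequence in 𝒱 is equi-lsc and satisfies (i) and (ii)
    (hequi : ∀ Vs : ℕ → (EuclideanSpace ℝ (Fin n) → EReal),
      (∀ ν, Vs ν ∈ 𝒱) → (∃ W, EpiConvergesOn X Vs W) →
      EquiLscOn X Vs ∧
      (∀ xb ∈ X, liminfAlphaBot (fun α => liminfNuX X xb (fun ν x =>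
        eintegral (Pν ν) (truncBelow (bop Y β (φν ν) (Vs ν) x) α))) = 0) ∧
      (∀ ν, LowerSemicontinuousOn
        (fun p : EuclideanSpace ℝ (Fin n) × Ξ => bop Y β (φν ν) (Vs ν) p.1 p.2)
        (X ×ˢ (univ : Set Ξ))) ∧
      EquiLscOn (X ×ˢ (univ : Set Ξ)) (fun ν p => bop Y β (φν ν) (Vs ν) p.1 p.2) ∧
      (∀ xb ∈ X,
        limsupAlphaTop (fun α => limsupNu (fun ν =>
          eintegral (Pν ν) (truncAbove (bop Y β (φν ν) (Vs ν) xb) α))) = 0 ∧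
        (∀ ν, UpperSemicontinuous (fun ξ : Ξ => bop Y β (φν ν) (Vs ν) xb ξ)) ∧
        EquiUscOn (univ : Set Ξ) (fun ν ξ => bop Y β (φν ν) (Vs ν) xb ξ)))
    -- 𝒱 is compact under the Attouch–Wets distance and each B_ν has a fixed point
    (hcompact : DlSeqCompact X zc 𝒱)
    (Vs : ℕ → (EuclideanSpace ℝ (Fin n) → EReal))
    (hfix : ∀ ν, Vs ν ∈ 𝒱 ∧ ∀ x ∈ X, Vs ν x = eintegral (Pν ν) (bop Y β (φν ν) (Vs ν) x))
    -- the fixed point V = B(V) in 𝒱 exists and is unique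
    (V : EuclideanSpace ℝ (Fin n) → EReal)
    (hV : V ∈ 𝒱 ∧ ∀ x ∈ X, V x = eintegral P (bop Y β φ V x))
    (huniq : ∀ W ∈ 𝒱, (∀ x ∈ X, W x = eintegral P (bop Y β φ W x)) →
      ∀ x ∈ X, W x = V x) :
    EpiConvergesOn X Vs V ∧
    ∀ x ∈ X, ∀ ξ : Ξ,
      OuterLimit (fun ν => ArgminOn (Y x ξ)
          (fun y => ((φν ν x y ξ : ℝ) : EReal) + (β : EReal) * Vs ν y)) ⊆
        ArgminOn (Y x ξ) (fun y => ((φ x y ξ : ℝ) : EReal) + (β : EReal) * V y) ∧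
      (ArgminOn (Y x ξ)
        (fun y => ((φ x y ξ : ℝ) : EReal) + (β : EReal) * V y)).Nonempty := by
  have hβ0 : 0 < β := hβ.1
  have hlsc : ∀ {V' : ℕ → EuclideanSpace ℝ (Fin n) → EReal}, (∀ ν, V' ν ∈ 𝒱) →
      ∀ ν, LscFcnOn X (V' ν) := fun h ν => h𝒱lsc _ (h ν)
  have hGlow : ∀ (V' : ℕ → EuclideanSpace ℝ (Fin n) → EReal) W, EpiConvergesOn X V' W →
      ∀ x ∈ X, ∀ ξ : Ξ, ∀ y ∈ X, ∀ c < ((φ x y ξ : ℝ) : EReal) + (β : EReal) * W y,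
        ∀ᶠ p in atTop ×ˢ 𝓝[X] y,
          c < ((φν p.1 x p.2 ξ : ℝ) : EReal) + (β : EReal) * V' p.1 p.2 := by
    intro V' W hepi x hx ξ y hy c hc
    refine add_mul_lower hβ0 (fun d hd => ?_) (fun d hd => hepi.eventually_lt hy hd) hc
    have h1 := hφe.eventually_lt (z := (x, y, ξ)) ⟨hx, hy, mem_univ _⟩ hd
    have h2 : Tendsto (fun w => (x, w, ξ)) (𝓝[X] y)
        (𝓝[X ×ˢ X ×ˢ (univ : Set Ξ)] (x, y, ξ)) := by
      refine tendsto_nhdsWithin_iff.2 ⟨?_, ?_⟩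
      · have : Continuous fun w : EuclideanSpace ℝ (Fin n) => (x, w, ξ) := by fun_prop
        exact (this.tendsto y).mono_left nhdsWithin_le_nhds
      · filter_upwards [eventually_mem_nhdsWithin] with w hw
        exact ⟨hx, hw, mem_univ _⟩
    exact (tendsto_fst.prodMk (h2.comp tendsto_snd)).eventually h1
  have hGpt : ∀ (V' : ℕ → EuclideanSpace ℝ (Fin n) → EReal) W, (∀ ν, V' ν ∈ 𝒱) →
      EpiConvergesOn X V' W → ∀ x ∈ X, ∀ ξ : Ξ, ∀ y ∈ X,
      Tendsto (fun ν => ((φν ν x y ξ : ℝ) : EReal) + (β : EReal) * V' ν y) atTop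
        (𝓝 (((φ x y ξ : ℝ) : EReal) + (β : EReal) * W y)) := by
    intro V' W hV' hepi x hx ξ y hy
    exact add_mul_tendsto (hφp x hx y hy ξ) (hepi.tendsto (hequi V' hV' ⟨W, hepi⟩).1 hy)
  -- Fatou's lemma for the inner minimal values bounds the lower limit, and for their negatives
  -- the upper limit.
  have hB : ∀ (V' : ℕ → EuclideanSpace ℝ (Fin n) → EReal) W, (∀ ν, V' ν ∈ 𝒱) → W ∈ 𝒱 →
      EpiConvergesOn X V' W → ∀ x ∈ X,
      Tendsto (fun ν => eintegral (Pν ν) (bop Y β (φν ν) (V' ν) x)) atTop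
        (𝓝 (eintegral P (bop Y β φ W x))) := by
    intro V' W hV' hW hepi x hx
    obtain ⟨-, htlow, -, helsc, hup⟩ := hequi V' hV' ⟨W, hepi⟩
    obtain ⟨htup, -, heusc⟩ := hup x hx
    have hint := (hA2 W hW).1 x hx
    have hintν := fun ν => (hA2ν ν (V' ν) (hV' ν)).1 x hx
    have blow : ∀ ξ : Ξ, ∀ c < bop Y β φ W x ξ,
        ∀ᶠ ν in atTop, c < bop Y β (φν ν) (V' ν) x ξ := by
      intro ξ c hc
      exact iInf_lower (G := fun ν y => ((φν ν x y ξ : ℝ) : EReal) + (β : EReal) * V' ν y)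
        (hY x hx ξ).2.1 (hY x hx ξ).2.2 (hGlow V' W hepi x hx ξ) hc
    have bup : ∀ ξ : Ξ, ∀ c < -bop Y β φ W x ξ,
        ∀ᶠ ν in atTop, c < -bop Y β (φν ν) (V' ν) x ξ := by
      intro ξ c hc
      refine (iInf_upper (G := fun ν y => ((φν ν x y ξ : ℝ) : EReal) + (β : EReal) * V' ν y)
        (hY x hx ξ).2.2 (hGpt V' W hV' hepi x hx ξ) (EReal.lt_neg_comm.1 hc)).mono ?_
      exact fun ν hν => EReal.lt_neg_comm.1 hν
    have low := eintegral_lower P Pν hweak (fun ν => bop Y β (φν ν) (V' ν) x) (bop Y β φ W x)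
      hintν hint (fun ξ c hc => by
        have h1 := helsc.eventually_lt (z := (x, ξ)) ⟨hx, mem_univ _⟩ (blow ξ) hc
        have h2 : Tendsto (fun w : Ξ => (x, w)) (𝓝 ξ) (𝓝[X ×ˢ (univ : Set Ξ)] (x, ξ)) := by
          refine tendsto_nhdsWithin_iff.2 ⟨?_, Eventually.of_forall fun w => ⟨hx, mem_univ _⟩⟩
          have : Continuous fun w : Ξ => (x, w) := by fun_prop
          exact this.tendsto ξ
        exact (tendsto_fst.prodMk (h2.comp tendsto_snd)).eventually h1)
      (tail_lower (h := fun ν x => bop Y β (φν ν) (V' ν) x) hx (htlow x hx))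
    have up := eintegral_lower P Pν hweak (fun ν ξ => -bop Y β (φν ν) (V' ν) x ξ)
      (fun ξ => -bop Y β φ W x ξ) (fun ν => (hintν ν).neg) hint.neg (fun ξ c hc => by
        have h1 := EquiLscOn.eventually_lt heusc (mem_univ ξ) (bup ξ) hc
        rwa [nhdsWithin_univ] at h1)
      (tail_upper htup)
    refine tendsto_order.2 ⟨low, fun c hc => ?_⟩
    rw [hint.eintegral_neg] at up
    refine (up (-c) (EReal.neg_lt_neg_iff.2 hc)).mono fun ν hν => ?_
    rw [(hintν ν).eintegral_neg] at hν
    exact EReal.neg_lt_neg_iff.1 hν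
  have hVs : ∀ ν, Vs ν ∈ 𝒱 := fun ν => (hfix ν).1
  have haw : Tendsto (fun ν => awDist X zc (Vs ν) V) atTop (𝓝 0) := by
    refine tendsto_of_subseq_tendsto fun ns hns => ?_
    obtain ⟨θ, hθ, hnsθ⟩ := strictMono_subseq_of_tendsto_atTop hns
    obtain ⟨W, hW, ψ', hψ', hlim⟩ := hcompact (fun κ => Vs (ns (θ κ))) fun κ => hVs _
    set ψ : ℕ → ℕ := fun κ => ns (θ (ψ' κ)) with hψdef
    have hψ : StrictMono ψ := by
      have h := hnsθ.comp hψ'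
      exact h
    -- The hypotheses on epi-convergent sequences pair `V' ν` with `φν ν` and `Pν ν`, so the
    -- subsequence is completed to a full sequence by the constant `W`.
    set V' := Function.extend ψ (fun κ => Vs (ψ κ)) fun _ => W with hV'def
    have hV'ψ : ∀ κ, V' (ψ κ) = Vs (ψ κ) := fun κ => hψ.injective.extend_apply _ _ κ
    have hV' : ∀ ν, V' ν ∈ 𝒱 := by
      intro ν
      by_cases hν : ∃ κ, ψ κ = ν
      · obtain ⟨κ, rfl⟩ := hν
        rw [hV'ψ]
        exact hVs _
      · rw [hV'def, Function.extend_apply' _ _ _ hν]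
        exact hW
    have hlim' : Tendsto (fun ν => awDist X zc (V' ν) W) atTop (𝓝 0) := by
      have h1 := tendsto_extend (pure_le_nhds (0 : ℝ)) hψ hlim
      refine h1.congr fun ν => ?_
      by_cases hν : ∃ κ, ψ κ = ν
      · obtain ⟨κ, rfl⟩ := hν
        rw [hV'ψ, hψ.injective.extend_apply]
      · rw [hV'def, Function.extend_apply' _ _ _ hν, Function.extend_apply' _ _ _ hν, awDist_self]
    have hepi : EpiConvergesOn X V' W :=
      epiConvergesOn_of_awDist hX zc (hlsc hV') (h𝒱lsc W hW) hlim'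
    have hWfix : ∀ x ∈ X, W x = eintegral P (bop Y β φ W x) := by
      intro x hx
      have h1 := (hepi.tendsto (hequi V' hV' ⟨W, hepi⟩).1 hx).comp hψ.tendsto_atTop
      have h2 := (hB V' W hV' hW hepi x hx).comp hψ.tendsto_atTop
      refine tendsto_nhds_unique h1 (h2.congr fun κ => ?_)
      simp only [Function.comp_apply]
      rw [hV'ψ]
      exact ((hfix (ψ κ)).2 x hx).symm
    refine ⟨fun κ => θ (ψ' κ), hlim.congr fun κ => ?_⟩
    exact awDist_congr X zc _ _ (huniq W hW hWfix)
  have hepi : EpiConvergesOn X Vs V :=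
    epiConvergesOn_of_awDist hX zc (hlsc hVs) (h𝒱lsc V hV.1) haw
  refine ⟨hepi, fun x hx ξ => ?_⟩
  obtain ⟨hne, hcpt, hsub⟩ := hY x hx ξ
  exact ⟨outerLimit_argmin_subset hcpt hsub (hGlow Vs V hepi x hx ξ) (hGpt Vs V hVs hepi x hx ξ),
    argmin_nonempty (G := fun ν y => ((φν ν x y ξ : ℝ) : EReal) + (β : EReal) * Vs ν y)
      hcpt hne hsub (hGlow Vs V hepi x hx ξ) (hGpt Vs V hVs hepi x hx ξ)⟩

end
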